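/- Let n ≥ 1, m ≥ 0, and ξ, ξ' ∈ ℝⁿ with (m, ξ) ≠ 0 and (m, ξ') ≠ 0 in ℝ^{1+n}. Let Φ(ζ) := ⟨ζ⟩_m = (m² + |ζ|²)^{1/2}, so that ∇Φ(ζ) = ζ/⟨ζ⟩_m, and set x := (m, ξ), y := (m, ξ') ∈ ℝ^{1+n}. Then (∇Φ(ξ) − ∇Φ(ξ')) · (ξ − ξ') = ((⟨ξ⟩_m + ⟨ξ'⟩_m)/2) · |x/|x| − y/|y||². -/

import Mathlib

open scoped RealInnerProductSpace

noncomputable section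

abbrev Euc (n : ℕ) : Type := EuclideanSpace ℝ (Fin n)

/-- `⟨ζ⟩_m = (m² + |ζ|²)^{1/2}`. -/
def hnorm {n : ℕ} (m : ℝ) (ζ : Euc n) : ℝ := Real.sqrt (m ^ 2 + ‖ζ‖ ^ 2)

/-- The vector `(r, w) ∈ ℝ^{1+n}` with the Euclidean (`L²`) norm. -/
def mk1 {n : ℕ} (r : ℝ) (w : Euc n) : WithLp 2 (ℝ × Euc n) :=
  (WithLp.equiv 2 (ℝ × Euc n)).symm (r, w)

theorem inner_mk1 {n : ℕ} (m r : ℝ) (ξ η : Euc n) :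
    ⟪mk1 m ξ, mk1 r η⟫ = m * r + ⟪ξ, η⟫ := by
  simp [mk1, WithLp.prod_inner_apply, mul_comm]

theorem norm_mk1 {n : ℕ} (m : ℝ) (ξ : Euc n) : ‖mk1 m ξ‖ = hnorm m ξ := by
  rw [norm_eq_sqrt_real_inner, inner_mk1, real_inner_self_eq_norm_sq, hnorm, sq m]

/-- In an inner product space, the difference of normalized vectors pairs with the difference
of the vectors to give the mean of the norms times the squared distance of the directions. -/
theorem inner_normalize_sub_normalize_sub {E : Type*} [NormedAddCommGroup E]
    [InnerProductSpace ℝ E] {x y : E} (hx : x ≠ 0) (hy : y ≠ 0) :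
    ⟪‖x‖⁻¹ • x - ‖y‖⁻¹ • y, x - y⟫
      = (‖x‖ + ‖y‖) / 2 * ‖‖x‖⁻¹ • x - ‖y‖⁻¹ • y‖ ^ 2 := by
  have hx' : ‖x‖ ≠ 0 := norm_ne_zero_iff.mpr hx
  have hy' : ‖y‖ ≠ 0 := norm_ne_zero_iff.mpr hy
  rw [← real_inner_self_eq_norm_sq (‖x‖⁻¹ • x - ‖y‖⁻¹ • y)]
  simp only [inner_sub_left, inner_sub_right, real_inner_smul_left, real_inner_smul_right,
    real_inner_self_eq_norm_sq, real_inner_comm x y, norm_smul, norm_inv, norm_norm]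
  field_simp
  ring

/-- **The curvature identity for the Klein-Gordon phase `Φ(ζ) = ⟨ζ⟩_m` (Section 2.2):**
`(∇Φ(ξ) − ∇Φ(ξ'))·(ξ − ξ') = ((⟨ξ⟩_m + ⟨ξ'⟩_m)/2)·|x/|x| − y/|y||²` with
`x = (m, ξ)`, `y = (m, ξ')`. -/
theorem stmt5 {n : ℕ} (hn : 1 ≤ n) (m : ℝ) (hm : 0 ≤ m) (ξ ξ' : Euc n)
    (hx : mk1 m ξ ≠ 0) (hy : mk1 m ξ' ≠ 0) :
    ⟪(hnorm m ξ)⁻¹ • ξ - (hnorm m ξ')⁻¹ • ξ', ξ - ξ'⟫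
      = (hnorm m ξ + hnorm m ξ') / 2 *
          ‖‖mk1 m ξ‖⁻¹ • mk1 m ξ - ‖mk1 m ξ'‖⁻¹ • mk1 m ξ'‖ ^ 2 := by
  have smul_sub_smul (a b : ℝ) :
      a • mk1 m ξ - b • mk1 m ξ' = mk1 (a * m - b * m) (a • ξ - b • ξ') := rfl
  have sub_eq : mk1 m ξ - mk1 m ξ' = mk1 (m - m) (ξ - ξ') := rfl
  have h := inner_normalize_sub_normalize_sub hx hy
  rw [sub_eq, smul_sub_smul, inner_mk1, sub_self, mul_zero, zero_add, ← smul_sub_smul] at h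
  simpa only [norm_mk1] using h
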